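/- arXiv:2109.07659 — 2 statements merged into one kernel-verified Lean document; each statement's English description precedes it below -/
import Mathlib

section
/- (Macchi) Let M be a positive integer, L an M×M complex matrix, and z a complex number such that I_M + zL is invertible. Set K = zL(I_M + zL)^{-1}. Then for every subset S of {1,...,M}, the k-point correlation of the L-ensemble equals a determinant of the kernel matrix: Σ_{T : S ⊆ T ⊆ {1,...,M}} z^{|T|} det(L_T) / det(I_M + zL) = det(K_S). -/
/-!
Write `A = zL`, and let `P` have the rows of `A` on `S` and those of `1 + A` off `S`. Then `P` is
`A` plus the diagonal indicator of the complement of `S`, so expanding `det P` over its rows leaves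
exactly the principal minors `det A_T` with `S ⊆ T`. On the other hand `K (1 + A) = A`, so
`P = Q (1 + A)`, where `Q` has the rows of `K` on `S` and those of `1` off `S`, and
`det Q = det K_S`.
-/

section PrincipalMinors

variable {n R : Type*} [Fintype n] [DecidableEq n] [CommRing R]

theorem det_piecewise_diagonal_eq_submatrix_det_mul_prod
    (A : Matrix n n R) (d : n → R) (T : Finset n) :
    (Matrix.of (T.piecewise A.row (Matrix.diagonal d).row)).det
      = (A.submatrix ((↑) : T → n) (↑)).det * ∏ i ∈ Tᶜ, d i := by
  have h_scale : Matrix.of (T.piecewise A.row (Matrix.diagonal d).row)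
      = Matrix.of fun i j => T.piecewise (1 : n → R) d i
          * Matrix.of (T.piecewise A.row (1 : Matrix n n R).row) i j := by
    ext i j
    by_cases hi : i ∈ T <;> simp [hi, Matrix.diagonal_apply, Matrix.one_apply]
  have h_prod : ∏ i, T.piecewise (1 : n → R) d i = ∏ i ∈ Tᶜ, d i := by
    simp [Finset.prod_piecewise, Finset.compl_eq_univ_sdiff]
  rw [h_scale, Matrix.det_mul_column, h_prod, Matrix.det_piecewise_one_eq_submatrix_det, mul_comm]

theorem det_add_diagonal_eq_sum_submatrix_det_mul_prod (A : Matrix n n R) (d : n → R) :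
    (A + Matrix.diagonal d).det
      = ∑ T : Finset n, (A.submatrix ((↑) : T → n) (↑)).det * ∏ i ∈ Tᶜ, d i := by
  calc (A + Matrix.diagonal d).det
      = ∑ T : Finset n, (Matrix.of (T.piecewise A.row (Matrix.diagonal d).row)).det :=
        Matrix.detRowAlternating.map_add_univ A.row (Matrix.diagonal d).row
    _ = _ := Finset.sum_congr rfl fun T _ =>
        det_piecewise_diagonal_eq_submatrix_det_mul_prod A d T

theorem sum_superset_submatrix_det_eq_det_piecewise (A : Matrix n n R) (S : Finset n) :
    ∑ T : Finset n with S ⊆ T, (A.submatrix ((↑) : T → n) (↑)).det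
      = (Matrix.of (S.piecewise A.row (1 + A).row)).det := by
  have h_rows : Matrix.of (S.piecewise A.row (1 + A).row)
      = A + Matrix.diagonal fun i => if i ∉ S then 1 else 0 := by
    ext i j
    by_cases hi : i ∈ S <;> simp [hi, Matrix.diagonal_apply, Matrix.one_apply, add_comm]
  have h_indicator (T : Finset n) :
      ∏ i ∈ Tᶜ, (if i ∉ S then (1 : R) else 0) = if S ⊆ T then 1 else 0 := by
    have h_subset : (∀ i ∈ Tᶜ, i ∉ S) ↔ S ⊆ T := by
      simp only [Finset.mem_compl, Finset.subset_iff, not_imp_not]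
    simp only [Finset.prod_boole, h_subset]
  simp only [h_rows, det_add_diagonal_eq_sum_submatrix_det_mul_prod, h_indicator, mul_ite, mul_one,
    mul_zero, Finset.sum_filter]

end PrincipalMinors

theorem of_piecewise_row_mul {l m n R : Type*} [DecidableEq l] [Fintype m]
    [NonUnitalNonAssocSemiring R]
    (S : Finset l) (A B : Matrix l m R) (C : Matrix m n R) :
    Matrix.of (S.piecewise A.row B.row) * C
      = Matrix.of (S.piecewise (A * C).row (B * C).row) := by
  ext i j
  by_cases hi : i ∈ S <;> simp [hi, Matrix.mul_apply]

theorem L_ensemble_correlation_det_general {n R : Type*} [Fintype n] [DecidableEq n] [CommRing R]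
    (L K : Matrix n n R) (z : R) (hK : K * (1 + z • L) = z • L) (S : Finset n) :
    ∑ T : Finset n with S ⊆ T, z ^ T.card * (L.submatrix ((↑) : T → n) (↑)).det
      = (K.submatrix ((↑) : S → n) (↑)).det * (1 + z • L).det := by
  calc ∑ T : Finset n with S ⊆ T, z ^ T.card * (L.submatrix ((↑) : T → n) (↑)).det
      = ∑ T : Finset n with S ⊆ T, ((z • L).submatrix ((↑) : T → n) (↑)).det := by
        simp only [Matrix.submatrix_smul, Pi.smul_apply, Matrix.det_smul, Fintype.card_coe]
    _ = (Matrix.of (S.piecewise (z • L).row (1 + z • L).row)).det :=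
        sum_superset_submatrix_det_eq_det_piecewise (z • L) S
    _ = (Matrix.of (S.piecewise K.row (1 : Matrix n n R).row) * (1 + z • L)).det := by
        rw [of_piecewise_row_mul, hK, Matrix.one_mul]
    _ = (K.submatrix ((↑) : S → n) (↑)).det * (1 + z • L).det := by
        rw [Matrix.det_mul, Matrix.det_piecewise_one_eq_submatrix_det]

/-- Macchi: if `I + zL` is invertible and `K = zL(I + zL)⁻¹`, then for every subset
`S`, the `k`-point correlation of the `L`-ensemble, i.e. the sum over subsets `T ⊇ S` of
`z^|T| det L_T / det (I + zL)`, equals `det K_S`. -/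
theorem L_ensemble_correlation_det (M : ℕ) (hM : 0 < M)
    (L : Matrix (Fin M) (Fin M) ℂ) (z : ℂ)
    (hunit : IsUnit (1 + z • L))
    (K : Matrix (Fin M) (Fin M) ℂ) (hK : K = z • L * (1 + z • L)⁻¹)
    (S : Finset (Fin M)) :
    (∑ T ∈ Finset.univ.filter (fun T : Finset (Fin M) => S ⊆ T),
        z ^ T.card *
          (L.submatrix (fun i : {x : Fin M // x ∈ T} => (i : Fin M))
            (fun i : {x : Fin M // x ∈ T} => (i : Fin M))).det) / (1 + z • L).det
      = (K.submatrix (fun i : {x : Fin M // x ∈ S} => (i : Fin M))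
          (fun i : {x : Fin M // x ∈ S} => (i : Fin M))).det := by
  have hdet : IsUnit (1 + z • L).det := (Matrix.isUnit_iff_isUnit_det _).mp hunit
  exact (div_eq_iff hdet.ne_zero).mpr <| L_ensemble_correlation_det_general L K z
    (hK ▸ Matrix.nonsing_inv_mul_cancel_right _ _ hdet) S
end

section
/- (Lattice thermodynamic limit of the pressure) Let g : ℝ → ℝ be even and continuous with |g(u)| ≤ C/(1+u²) for some constant C > 0, let τ > 0, and define f^∞(t) := Σ_{s∈ℤ} g(τs) e^{2πist} (the sum converges absolutely and f^∞ is real-valued and continuous since g is even). Assume f^∞(t) ≥ 0 for all t, and let z > 0. For each positive integer M let L^{(M)} be the M×M circulant matrix with entries L^{(M)}(j,l) = g( (τM/π) sin(π(j−l)/M) ). Then lim_{M→∞} (1/M) log |det(I_M + z L^{(M)})| = ∫_{−1/2}^{1/2} log(1 + z f^∞(t)) dt. -/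
/-!
The characters `s ↦ e^{2πiks/M}` of `ℤ/M` diagonalize the circulant matrix, so `det (1 + z L^{(M)})`
is the product over `k` of the values of `1 + z p_M` at the points `k/M`, where `p_M` is the
trigonometric polynomial with coefficients `g((τM/π) sin(πs/M))`. Index these by the symmetric
residues `|s| ≤ M/2`. There Jordan's inequality `|sin x| ≥ 2|x|/π` gives
`|(τM/π) sin(πs/M)| ≥ (2/π)τ|s|`, so the coefficients have a summable bound independent of `M`,
and each of them tends to `g(τs)`. By dominated convergence in the Banach space of continuous
functions on the circle, `p_M → f^∞` uniformly. As `1 + z f^∞` does not vanish,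
`log |1 + z p_M| → log |1 + z f^∞|` uniformly as well, so the averages of these two functions over
the points `k/M` have the same limit, and those of the second are Riemann sums.
-/

open MeasureTheory Filter Topology

open Matrix (circulant)

section Circulant

lemma det_eq_prod_of_apply_basis_eq_smul {R M ι : Type*} [CommRing R] [AddCommGroup M]
    [Module R M] [Fintype ι] (b : Module.Basis ι R M) {f : M →ₗ[R] M} {μ : ι → R}
    (hf : ∀ i, f (b i) = μ i • b i) :
    LinearMap.det f = ∏ i, μ i := by
  classical
  have h : LinearMap.toMatrix b b f = Matrix.diagonal μ := by
    ext i j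
    rcases eq_or_ne i j with rfl | hij
    · simp [LinearMap.toMatrix_apply, hf]
    · simp [LinearMap.toMatrix_apply, hf, hij]
  rw [← LinearMap.det_toMatrix b, h, Matrix.det_diagonal]

variable {G : Type*} [AddCommGroup G] [Fintype G]

lemma circulant_mulVec_addChar (v : G → ℂ) (χ : AddChar G ℂ) :
    (circulant v).mulVec χ = (∑ s, v s * χ⁻¹ s) • ⇑χ := by
  ext j
  simp only [Matrix.mulVec, dotProduct, Matrix.circulant_apply, Pi.smul_apply, smul_eq_mul,
    Finset.sum_mul, AddChar.inv_apply]
  refine Fintype.sum_equiv (Equiv.subLeft j) _ _ fun l => ?_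
  rw [Equiv.subLeft_apply, mul_assoc, ← AddChar.map_add_eq_mul]
  congr 2
  abel

theorem det_circulant [DecidableEq G] (v : G → ℂ) :
    (circulant v).det = ∏ χ : AddChar G ℂ, ∑ s, v s * χ s := by
  rw [← LinearMap.det_toLin', det_eq_prod_of_apply_basis_eq_smul (AddChar.complexBasis G)
    (μ := fun χ => ∑ s, v s * χ⁻¹ s)
    fun χ => by
      simp only [AddChar.complexBasis_apply, Matrix.toLin'_apply, circulant_mulVec_addChar]]
  exact Fintype.prod_equiv (Equiv.inv _) _ _ fun _ => rfl

theorem det_one_add_smul_circulant [DecidableEq G] (z : ℂ) (v : G → ℂ) :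
    (1 + z • circulant v).det = ∏ χ : AddChar G ℂ, (1 + z * ∑ s, v s * χ s) := by
  rw [← Matrix.circulant_single_one, ← Matrix.circulant_smul, ← Matrix.circulant_add,
    det_circulant]
  simp [add_mul, Finset.sum_add_distrib, Pi.single_apply, Finset.mul_sum, mul_assoc]

end Circulant

lemma tendstoUniformly_comp_of_continuousAt {X β γ ι : Type*} [TopologicalSpace X] [CompactSpace X]
    [UniformSpace β] [UniformSpace γ] {l : Filter ι} {F : ι → X → β} {f : X → β} {Φ : β → γ}
    (hF : TendstoUniformly F f l) (hf : Continuous f) (hΦ : ∀ x, ContinuousAt Φ (f x)) :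
    TendstoUniformly (fun i x => Φ (F i x)) (fun x => Φ (f x)) l := fun _ hr => by
  have hr' := (isCompact_range hf).uniformContinuousAt_of_continuousAt Φ
    (Set.forall_mem_range.2 hΦ) hr
  exact (hF _ hr').mono fun i hi x => hi x (Set.mem_range_self x)

lemma zmodFinEquiv_apply {N : ℕ} [NeZero N] (i : Fin N) :
    ZMod.finEquiv N i = ((i : ℕ) : ZMod N) := by
  cases N with
  | zero => exact i.elim0
  | succ n => exact (Fin.cast_val_eq_self i).symm

lemma sum_toAddCircle_eq_sum_range {M : Type*} [AddCommMonoid M] {N : ℕ} [NeZero N]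
    (f : UnitAddCircle → M) :
    ∑ k : ZMod N, f (ZMod.toAddCircle k) = ∑ i ∈ Finset.range N, f ((i / N : ℝ)) := by
  rw [← Fin.sum_univ_eq_sum_range (fun i : ℕ => f ((i / N : ℝ))) N]
  refine (Fintype.sum_equiv (ZMod.finEquiv N).toEquiv _ _ fun i => ?_).symm
  rw [← ZMod.toAddCircle_natCast]
  exact congrArg (f <| ZMod.toAddCircle ·) (zmodFinEquiv_apply i).symm

section RiemannSum

variable {E : Type*} [NormedAddCommGroup E] [NormedSpace ℝ E]

lemma sum_integral_div {f : ℝ → E} (hf : Continuous f) {N : ℕ} (hN : N ≠ 0) :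
    ∑ i ∈ Finset.range N, ∫ t in (i / N : ℝ)..(i + 1) / N, f t = ∫ t in (0 : ℝ)..1, f t := by
  have h := intervalIntegral.sum_integral_adjacent_intervals (a := fun i : ℕ => (i / N : ℝ))
    (n := N) fun _ _ => hf.intervalIntegrable (μ := volume) _ _
  simpa [hN] using h

variable [CompleteSpace E]

lemma norm_smul_sub_integral_le {f : ℝ → E} {a b ε : ℝ} {c : E}
    (hf : IntervalIntegrable f volume a b) (h : ∀ t ∈ Set.uIoc a b, ‖c - f t‖ ≤ ε) :
    ‖(b - a) • c - ∫ t in a..b, f t‖ ≤ ε * |b - a| := by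
  rw [← intervalIntegral.integral_const, ← intervalIntegral.integral_sub (by simp) hf]
  exact intervalIntegral.norm_integral_le_of_norm_le_const h

theorem tendsto_inv_smul_sum_range {f : ℝ → E} (hf : UniformContinuous f) :
    Tendsto (fun N : ℕ => (N : ℝ)⁻¹ • ∑ i ∈ Finset.range N, f (i / N)) atTop
      (𝓝 (∫ t in (0 : ℝ)..1, f t)) := by
  refine Metric.tendsto_nhds.2 fun ε hε => ?_
  obtain ⟨δ, hδ, hfδ⟩ := Metric.uniformContinuous_iff.1 hf (ε / 2) (half_pos hε)
  filter_upwards [eventually_ne_atTop 0,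
    tendsto_inv_atTop_nhds_zero_nat.eventually_lt_const hδ] with N hN hNδ
  have hcell (i : ℕ) : ‖(N : ℝ)⁻¹ • f (i / N) - ∫ t in (i / N : ℝ)..(i + 1) / N, f t‖ ≤
      ε / 2 * (N : ℝ)⁻¹ := by
    have hlen : ((i + 1) / N - i / N : ℝ) = (N : ℝ)⁻¹ := by ring
    have h := norm_smul_sub_integral_le (c := f (i / N)) (ε := ε / 2)
      (hf.continuous.intervalIntegrable (i / N : ℝ) ((i + 1) / N)) fun t ht => by
        rw [Set.uIoc_of_le (by gcongr; linarith), Set.mem_Ioc] at ht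
        rw [← dist_eq_norm]
        refine (hfδ ?_).le
        rw [Real.dist_eq, abs_sub_lt_iff]
        constructor <;> linarith
    rwa [hlen, abs_of_nonneg (by positivity)] at h
  calc dist ((N : ℝ)⁻¹ • ∑ i ∈ Finset.range N, f (i / N)) (∫ t in (0 : ℝ)..1, f t)
      = ‖∑ i ∈ Finset.range N,
          ((N : ℝ)⁻¹ • f (i / N) - ∫ t in (i / N : ℝ)..(i + 1) / N, f t)‖ := by
        rw [Finset.sum_sub_distrib, ← Finset.smul_sum, sum_integral_div hf.continuous hN,
          dist_eq_norm]
    _ ≤ ∑ i ∈ Finset.range N, ε / 2 * (N : ℝ)⁻¹ := norm_sum_le_of_le _ fun i _ => hcell i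
    _ = ε / 2 := by
        rw [Finset.sum_const, Finset.card_range, nsmul_eq_mul, mul_left_comm,
          mul_inv_cancel₀ (Nat.cast_ne_zero.2 hN), mul_one]
    _ < ε := half_lt_self hε

theorem tendsto_average_toAddCircle {f : UnitAddCircle → E} (hf : Continuous f) :
    Tendsto (fun n : ℕ => ((n + 1 : ℕ) : ℝ)⁻¹ • ∑ k : ZMod (n + 1), f (ZMod.toAddCircle k))
      atTop (𝓝 (∫ x, f x)) := by
  have huc : UniformContinuous fun t : ℝ => f t :=
    (CompactSpace.uniformContinuous_of_continuous hf).comp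
      (uniformContinuous_of_continuousAt_zero (QuotientAddGroup.mk' _)
        (AddCircle.continuous_mk' (1 : ℝ)).continuousAt)
  have h := (tendsto_add_atTop_iff_nat 1).2 (tendsto_inv_smul_sum_range huc)
  simpa only [sum_toAddCircle_eq_sum_range, ← UnitAddCircle.intervalIntegral_preimage 0 f,
    zero_add] using h

theorem tendsto_average_toAddCircle_of_tendstoUniformly {F : ℕ → UnitAddCircle → E}
    {f : UnitAddCircle → E} (hF : TendstoUniformly F f atTop) (hf : Continuous f) :
    Tendsto (fun n : ℕ => ((n + 1 : ℕ) : ℝ)⁻¹ • ∑ k : ZMod (n + 1), F n (ZMod.toAddCircle k))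
      atTop (𝓝 (∫ x, f x)) := by
  refine tendsto_of_tendsto_of_dist (tendsto_average_toAddCircle hf)
    (Metric.tendsto_nhds.2 fun ε hε => ?_)
  filter_upwards [Metric.tendstoUniformly_iff.1 hF (ε / 2) (half_pos hε)] with n hn
  rw [dist_zero_right, Real.norm_of_nonneg dist_nonneg]
  calc _ ≤ ((n + 1 : ℕ) : ℝ)⁻¹ * ∑ k : ZMod (n + 1), ε / 2 := by
        rw [dist_smul₀, Real.norm_of_nonneg (by positivity)]
        gcongr
        exact dist_sum_sum_le_of_le _ fun k _ => (hn _).le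
    _ = ε / 2 := by
        rw [Finset.sum_const, Finset.card_univ, ZMod.card, nsmul_eq_mul,
          inv_mul_cancel_left₀ (Nat.cast_ne_zero.2 n.succ_ne_zero)]
    _ < ε := half_lt_self hε

end RiemannSum

/-- The Fourier series with coefficients `a`, as a continuous function on the circle. The sum is
taken in the sup norm, so it is the junk value `0` if the series is not summable there. -/
noncomputable def fourierSeries (a : ℤ → ℂ) : C(UnitAddCircle, ℂ) := ∑' s, a s • fourier s

lemma fourierSeries_apply {a : ℤ → ℂ} (ha : Summable fun s => ‖a s‖) (x : UnitAddCircle) :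
    fourierSeries a x = ∑' s, a s * fourier s x := by
  have h : Summable fun s => a s • (fourier s : C(UnitAddCircle, ℂ)) :=
    .of_norm (by simpa [norm_smul, fourier_norm] using ha)
  simp [fourierSeries, ← ContinuousMap.tsum_apply h]

lemma fourierSeries_coe {a : ℤ → ℂ} (ha : Summable fun s => ‖a s‖) (t : ℝ) :
    fourierSeries a t =
      ∑' s : ℤ, a s * Complex.exp (2 * Real.pi * Complex.I * (s : ℂ) * (t : ℂ)) := by
  simp [fourierSeries_apply ha]

lemma eventually_valMinAbs_intCast_eq (s : ℤ) :
    ∀ᶠ n : ℕ in atTop, (s : ZMod (n + 1)).valMinAbs = s := by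
  filter_upwards [eventually_ge_atTop (2 * s.natAbs)] with n hn
  rw [ZMod.valMinAbs_spec]
  refine ⟨rfl, ?_⟩
  rw [Set.mem_Ioc]
  omega

theorem tendsto_sum_zmod_of_dominated {V : Type*} [NormedAddCommGroup V] [CompleteSpace V]
    {u : ∀ n : ℕ, ZMod (n + 1) → V} {c : ℤ → V} {b : ℤ → ℝ} (hb : Summable b)
    (hub : ∀ n k, ‖u n k‖ ≤ b k.valMinAbs)
    (huc : ∀ s : ℤ, Tendsto (fun n => u n s) atTop (𝓝 (c s))) :
    Tendsto (fun n => ∑ k, u n k) atTop (𝓝 (∑' s, c s)) := by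
  have hinj (n : ℕ) : Function.Injective (ZMod.valMinAbs (n := n + 1)) := ZMod.injective_valMinAbs
  have hext (s : ℤ) : (fun n => u n s) =ᶠ[atTop]
      fun n => Function.extend ZMod.valMinAbs (u n) 0 s :=
    (eventually_valMinAbs_intCast_eq s).mono fun n hn => by
      conv_rhs => rw [← hn]
      exact ((hinj n).extend_apply _ _ _).symm
  have hbound (n : ℕ) (s : ℤ) : ‖Function.extend ZMod.valMinAbs (u n) 0 s‖ ≤ b s := by
    by_cases hs : ∃ k : ZMod (n + 1), k.valMinAbs = s
    · obtain ⟨k, rfl⟩ := hs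
      simpa [(hinj n).extend_apply] using hub n k
    · obtain ⟨m, hm⟩ := (eventually_valMinAbs_intCast_eq s).exists
      simpa [Function.extend_apply' _ _ _ hs, hm] using (norm_nonneg _).trans (hub m s)
  have h := tendsto_tsum_of_dominated_convergence hb (fun s => (huc s).congr' (hext s))
    (Eventually.of_forall hbound)
  simpa only [tsum_extend_zero (hinj _), tsum_fintype] using h

theorem tendsto_sum_smul_fourier {v : ∀ n : ℕ, ZMod (n + 1) → ℂ} {a : ℤ → ℂ} {b : ℤ → ℝ}
    (hb : Summable b) (hvb : ∀ n k, ‖v n k‖ ≤ b k.valMinAbs)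
    (hva : ∀ s : ℤ, Tendsto (fun n => v n s) atTop (𝓝 (a s))) :
    Tendsto (fun n => ∑ k, v n k • (fourier k.valMinAbs : C(UnitAddCircle, ℂ))) atTop
      (𝓝 (fourierSeries a)) := by
  refine tendsto_sum_zmod_of_dominated hb
    (fun n k => by simpa [norm_smul, fourier_norm] using hvb n k) fun s =>
      ((hva s).smul_const (fourier s)).congr' ?_
  filter_upwards [eventually_valMinAbs_intCast_eq s] with n hn
  rw [hn]

lemma addChar_zmodAddEquiv_apply {N : ℕ} [NeZero N] (k s : ZMod N) :
    AddChar.zmodAddEquiv k s = fourier s.valMinAbs (ZMod.toAddCircle k) := by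
  rw [fourier_apply, ← map_zsmul, zsmul_eq_mul, ZMod.coe_valMinAbs, mul_comm]
  rfl

lemma det_one_add_smul_circulant_zmod {N : ℕ} [NeZero N] (z : ℂ) (v : ZMod N → ℂ) :
    (1 + z • circulant v).det = ∏ k : ZMod N, (1 + z • ∑ s : ZMod N, v s •
      (fourier s.valMinAbs : C(UnitAddCircle, ℂ))) (ZMod.toAddCircle k) := by
  rw [det_one_add_smul_circulant]
  refine (Fintype.prod_equiv AddChar.zmodAddEquiv.toEquiv _ _ fun k => ?_).symm
  have hk (s : ZMod N) : (AddChar.zmodAddEquiv.toEquiv k : AddChar (ZMod N) ℂ) s =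
      fourier s.valMinAbs (ZMod.toAddCircle k) := addChar_zmodAddEquiv_apply k s
  simp only [hk, ContinuousMap.add_apply, ContinuousMap.one_apply, ContinuousMap.smul_apply,
    ContinuousMap.sum_apply, smul_eq_mul]

theorem tendsto_log_norm_prod_toAddCircle {F : ℕ → C(UnitAddCircle, ℂ)} {f : C(UnitAddCircle, ℂ)}
    (hF : Tendsto F atTop (𝓝 f)) (hf : ∀ x, f x ≠ 0) :
    Tendsto (fun n : ℕ => ((n + 1 : ℕ) : ℝ)⁻¹ *
        Real.log ‖∏ k : ZMod (n + 1), F n (ZMod.toAddCircle k)‖)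
      atTop (𝓝 (∫ x, Real.log ‖f x‖)) := by
  have hne : ∀ᶠ n in atTop, ∀ x, F n x ≠ 0 := by
    simpa only [ContinuousMap.isUnit_iff_forall_ne_zero] using
      hF.eventually (Units.isOpen.mem_nhds (ContinuousMap.isUnit_iff_forall_ne_zero f |>.2 hf))
  have hlog := tendstoUniformly_comp_of_continuousAt (Φ := fun w => Real.log ‖w‖)
    (ContinuousMap.tendsto_iff_tendstoUniformly.1 hF) f.continuous
    fun x => continuousAt_id.norm.log (norm_ne_zero_iff.2 (hf x))
  refine (tendsto_average_toAddCircle_of_tendstoUniformly hlog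
    (f.continuous.norm.log fun x => norm_ne_zero_iff.2 (hf x))).congr' ?_
  filter_upwards [hne] with n hn
  rw [norm_prod, Real.log_prod fun k _ => norm_ne_zero_iff.2 (hn _), smul_eq_mul]

theorem tendsto_log_norm_det_one_add_smul_circulant {v : ∀ n : ℕ, ZMod (n + 1) → ℂ}
    {a : ℤ → ℂ} {b : ℤ → ℝ} (hb : Summable b) (hvb : ∀ n k, ‖v n k‖ ≤ b k.valMinAbs)
    (hva : ∀ s : ℤ, Tendsto (fun n => v n s) atTop (𝓝 (a s)))
    {z : ℂ} (hz : ∀ x, 1 + z * fourierSeries a x ≠ 0) :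
    Tendsto (fun n : ℕ => ((n + 1 : ℕ) : ℝ)⁻¹ * Real.log ‖(1 + z • circulant (v n)).det‖)
      atTop (𝓝 (∫ x, Real.log ‖1 + z * fourierSeries a x‖)) := by
  simp_rw [det_one_add_smul_circulant_zmod]
  exact tendsto_log_norm_prod_toAddCircle (f := 1 + z • fourierSeries a)
    (((tendsto_sum_smul_fourier hb hvb hva).const_smul z).const_add 1) hz

/-- The signed length of the chord that subtends an arc of length `s` on a circle of
circumference `p`. -/
noncomputable def chord (p s : ℝ) : ℝ := p / Real.pi * Real.sin (Real.pi * s / p)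

lemma antiperiodic_chord {p : ℝ} (hp : p ≠ 0) : Function.Antiperiodic (chord p) p := fun s => by
  rw [chord, chord, mul_add, add_div, mul_div_cancel_right₀ _ hp, Real.sin_add_pi, mul_neg]

lemma tendsto_chord (s : ℝ) : Tendsto (fun p => chord p s) atTop (𝓝 s) := by
  have hsinc : Tendsto (fun p : ℝ => s * Real.sinc (Real.pi * s / p)) atTop (𝓝 s) := by
    have hdiv : Tendsto (fun p : ℝ => Real.pi * s / p) atTop (𝓝 0) :=
      tendsto_const_nhds.div_atTop tendsto_id
    simpa [Function.comp_def] using ((Real.continuous_sinc.tendsto 0).comp hdiv).const_mul s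
  refine hsinc.congr' ?_
  filter_upwards [eventually_ne_atTop 0] with p hp
  rcases eq_or_ne s 0 with rfl | hs
  · simp [chord]
  · rw [Real.sinc_of_ne_zero (by positivity), chord]
    field_simp

lemma two_div_pi_mul_abs_le_abs_chord {p s : ℝ} (hs : 2 * |s| ≤ p) :
    2 / Real.pi * |s| ≤ |chord p s| := by
  rcases (abs_nonneg s).eq_or_lt with h0 | h0
  · rw [← h0, mul_zero]
    exact abs_nonneg _
  have hp : 0 < p := by linarith
  have hπ := Real.pi_pos
  have habs : |Real.pi * s / p| = Real.pi * |s| / p := by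
    rw [abs_div, abs_mul, abs_of_pos hπ, abs_of_pos hp]
  have hsin := Real.mul_abs_le_abs_sin (x := Real.pi * s / p) (by
    rw [habs, div_le_div_iff₀ hp two_pos]
    nlinarith)
  calc 2 / Real.pi * |s| = p / Real.pi * (2 / Real.pi * |Real.pi * s / p|) := by
        rw [habs]; field_simp
    _ ≤ p / Real.pi * |Real.sin (Real.pi * s / p)| := by gcongr
    _ = |chord p s| := by rw [chord, abs_mul, abs_of_pos (div_pos hp hπ)]

lemma periodic_comp_mul_chord {α : Type*} {g : ℝ → α} (hg : Function.Even g) (τ : ℝ) {p : ℝ}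
    (hp : p ≠ 0) : Function.Periodic (fun s => g (τ * chord p s)) p := fun s => by
  simp only [antiperiodic_chord hp s, mul_neg, hg _]

lemma periodic_apply_valMinAbs_intCast {α : Type*} {N : ℕ} {h : ℝ → α}
    (hh : Function.Periodic h N) (s : ℤ) : h (s : ZMod N).valMinAbs = h s := by
  have hdvd : (N : ℤ) ∣ (s : ZMod N).valMinAbs - s := by
    rw [← ZMod.intCast_eq_intCast_iff_dvd_sub, ZMod.coe_valMinAbs]
  obtain ⟨m, hm⟩ := hdvd
  rw [eq_add_of_sub_eq' hm, mul_comm]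
  push_cast
  exact hh.int_mul m s

lemma det_one_add_smul_of_sub_eq_circulant {R : Type*} [CommRing R] {N : ℕ} [NeZero N] {h : ℝ → R}
    (hh : Function.Periodic h N) (z : R) :
    (1 + z • Matrix.of fun j l : Fin N => h (j - l)).det =
      (1 + z • circulant fun k : ZMod N => h k.valMinAbs).det := by
  rw [← Matrix.det_submatrix_equiv_self (ZMod.finEquiv N).toEquiv]
  congr 1
  ext j l
  have hjl := periodic_apply_valMinAbs_intCast hh ((j : ℕ) - (l : ℕ))
  push_cast at hjl
  rw [Matrix.submatrix_apply, Matrix.add_apply, Matrix.add_apply]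
  congr 1
  · simp only [Matrix.one_apply, EmbeddingLike.apply_eq_iff_eq]
  · simp [zmodFinEquiv_apply, hjl]

lemma summable_int_comp_mul_abs {φ : ℝ → ℝ} (hφ : AntitoneOn φ (Set.Ici 0))
    (hφ_int : IntegrableOn φ (Set.Ioi 0)) (hφ_nonneg : ∀ t, 0 < t → 0 ≤ φ t) {c : ℝ} (hc : 0 < c) :
    Summable fun s : ℤ => φ (c * |(s : ℝ)|) := by
  have hnat : Summable fun n : ℕ => φ (c * n) :=
    AntitoneOn.summable_of_integrableOn_Ioi_zero (f := fun t => φ (c * t))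
      (fun _ hx _ hy hxy => hφ (mul_nonneg hc.le hx) (mul_nonneg hc.le hy) (by gcongr))
      ((integrableOn_Ioi_comp_mul_left_iff φ 0 hc).2 (by rwa [mul_zero]))
      fun t ht => hφ_nonneg _ (mul_pos hc ht)
  exact .of_nat_of_neg (by simpa using hnat) (by simpa using hnat)

lemma norm_comp_mul_chord_le {E : Type*} [Norm E] {g : ℝ → E} {φ : ℝ → ℝ}
    (hφ : AntitoneOn φ (Set.Ici 0)) (hgφ : ∀ u, ‖g u‖ ≤ φ |u|) (τ : ℝ) {p s : ℝ}
    (hs : 2 * |s| ≤ p) : ‖g (τ * chord p s)‖ ≤ φ (2 / Real.pi * |τ| * |s|) := by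
  refine (hgφ _).trans (hφ (Set.mem_Ici.2 (by positivity)) (Set.mem_Ici.2 (abs_nonneg _)) ?_)
  calc 2 / Real.pi * |τ| * |s| = |τ| * (2 / Real.pi * |s|) := by ring
    _ ≤ |τ| * |chord p s| := by gcongr; exact two_div_pi_mul_abs_le_abs_chord hs
    _ = |τ * chord p s| := (abs_mul _ _).symm

lemma two_mul_abs_valMinAbs_le {N : ℕ} [NeZero N] (k : ZMod N) :
    2 * |(k.valMinAbs : ℝ)| ≤ N := by
  have h := k.natAbs_valMinAbs_le
  rw [← Int.cast_abs, Int.abs_eq_natAbs]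
  exact_mod_cast (by lia : 2 * k.valMinAbs.natAbs ≤ N)

theorem lattice_thermodynamic_limit_pressure_general {g : ℝ → ℂ}
    (hg_even : Function.Even g) (hg_cont : Continuous g) {φ : ℝ → ℝ}
    (hφ : AntitoneOn φ (Set.Ici 0)) (hφ_int : IntegrableOn φ (Set.Ioi 0))
    (hgφ : ∀ u, ‖g u‖ ≤ φ |u|) {τ : ℝ} (hτ : τ ≠ 0) {f : ℝ → ℂ}
    (hf : ∀ t : ℝ, f t =
      ∑' s : ℤ, g (τ * s) * Complex.exp (2 * Real.pi * Complex.I * (s : ℂ) * (t : ℂ)))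
    {z : ℂ} (hz : ∀ t, 1 + z * f t ≠ 0) :
    Tendsto (fun M : ℕ => (1 / (M : ℝ)) * Real.log
        ‖(1 + z • Matrix.of (fun j l : Fin M =>
          g ((τ * M / Real.pi) * Real.sin (Real.pi * ((j : ℝ) - (l : ℝ)) / M)))).det‖)
      atTop (𝓝 (∫ t in (-(1 / 2) : ℝ)..(1 / 2 : ℝ), Real.log ‖1 + z * f t‖)) := by
  have hφ_nonneg t (ht : 0 < t) : 0 ≤ φ t := by
    simpa [abs_of_pos ht] using (norm_nonneg _).trans (hgφ t)
  have hsymbol (t : ℝ) : fourierSeries (fun s => g (τ * s)) t = f t := by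
    rw [hf, fourierSeries_coe]
    refine (summable_int_comp_mul_abs hφ hφ_int hφ_nonneg (abs_pos.2 hτ)).of_nonneg_of_le
      (fun _ => norm_nonneg _) fun s => (hgφ _).trans_eq (by rw [abs_mul])
  have hper (n : ℕ) : Function.Periodic (fun s => g (τ * chord (n + 1 : ℕ) s)) (n + 1 : ℕ) :=
    periodic_comp_mul_chord hg_even τ (Nat.cast_ne_zero.2 n.succ_ne_zero)
  have hcoeff (s : ℤ) : Tendsto
      (fun n : ℕ => g (τ * chord (n + 1 : ℕ) (s : ZMod (n + 1)).valMinAbs)) atTop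
      (𝓝 (g (τ * s))) := by
    have hp := tendsto_natCast_atTop_atTop (R := ℝ).comp (tendsto_add_atTop_nat 1)
    simp_rw [fun n => periodic_apply_valMinAbs_intCast (hper n) s]
    exact (hg_cont.tendsto _).comp (((tendsto_chord s).comp hp).const_mul τ)
  have hne (x : UnitAddCircle) : 1 + z * fourierSeries (fun s => g (τ * s)) x ≠ 0 := by
    obtain ⟨t, rfl⟩ := QuotientAddGroup.mk_surjective x
    exact hsymbol t ▸ hz t
  have hlim := tendsto_log_norm_det_one_add_smul_circulant
    (summable_int_comp_mul_abs hφ hφ_int hφ_nonneg (c := 2 / Real.pi * |τ|) (by positivity))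
    (fun n k => norm_comp_mul_chord_le hφ hgφ τ (two_mul_abs_valMinAbs_le k)) hcoeff hne
  rw [← UnitAddCircle.intervalIntegral_preimage (-(1 / 2)),
    (by norm_num : (-(1 / 2) + 1 : ℝ) = 1 / 2)] at hlim
  simp_rw [← det_one_add_smul_of_sub_eq_circulant (hper _), hsymbol] at hlim
  refine (tendsto_add_atTop_iff_nat 1).1 (hlim.congr fun n => ?_)
  simp [chord, mul_assoc, mul_div_assoc]

lemma norm_det_one_add_smul_ofReal {ι : Type*} [Fintype ι] [DecidableEq ι] (z : ℝ)
    (A : Matrix ι ι ℝ) :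
    ‖(1 + (z : ℂ) • A.map Complex.ofReal).det‖ = |(1 + z • A).det| := by
  rw [← Real.norm_eq_abs, ← Complex.norm_real, ← Complex.ofRealHom_eq_coe (Matrix.det _),
    RingHom.map_det]
  congr 2
  ext i j
  simp [Matrix.one_apply, apply_ite]

lemma antitoneOn_div_one_add_sq {C : ℝ} (hC : 0 ≤ C) :
    AntitoneOn (fun u : ℝ => C / (1 + u ^ 2)) (Set.Ici 0) := fun x (hx : 0 ≤ x) y _ hxy => by
  dsimp only
  gcongr

lemma integrable_div_one_add_sq (C : ℝ) : Integrable fun u : ℝ => C / (1 + u ^ 2) := by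
  simpa only [div_eq_mul_inv] using integrable_inv_one_add_sq.const_mul C

/-- lattice thermodynamic limit of the pressure: for `g` even, continuous, bounded
by `C/(1+u²)`, lattice spacing `τ > 0`, symbol `f^∞(t) = Σ_{s∈ℤ} g(τs) e^{2πist} ≥ 0` and
fugacity `z > 0`, with `L^{(M)}` the circulant matrix with entries
`g((τM/π) sin(π(j-l)/M))`, one has
`lim_{M→∞} (1/M) log |det(I + z L^{(M)})| = ∫_{-1/2}^{1/2} log(1 + z f^∞(t)) dt`. -/
theorem lattice_thermodynamic_limit_pressure (g : ℝ → ℝ)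
    (hg_even : ∀ u : ℝ, g (-u) = g u) (hg_cont : Continuous g)
    (C : ℝ) (hC : 0 < C) (hg_bound : ∀ u : ℝ, |g u| ≤ C / (1 + u ^ 2))
    (τ : ℝ) (hτ : 0 < τ)
    (finf : ℝ → ℝ)
    (hfinf : ∀ t : ℝ, (finf t : ℂ) =
      ∑' s : ℤ, (g (τ * s) : ℂ) * Complex.exp (2 * Real.pi * Complex.I * (s : ℂ) * (t : ℂ)))
    (hfinf_pos : ∀ t : ℝ, 0 ≤ finf t)
    (z : ℝ) (hz : 0 < z) :
    Tendsto (fun M : ℕ =>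
        (1 / (M : ℝ)) * Real.log
          |(1 + z • Matrix.of (fun j l : Fin M =>
              g ((τ * M / Real.pi) * Real.sin (Real.pi * ((j : ℝ) - (l : ℝ)) / M)))).det|)
      atTop
      (𝓝 (∫ t in (-(1/2) : ℝ)..(1/2 : ℝ), Real.log (1 + z * finf t))) := by
  have hpos t : 0 < 1 + z * finf t := by linarith [mul_nonneg hz.le (hfinf_pos t)]
  have h := lattice_thermodynamic_limit_pressure_general (g := fun u => (g u : ℂ))
    (f := fun t => (finf t : ℂ)) (z := (z : ℂ)) (fun u => congrArg _ (hg_even u))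
    (Complex.continuous_ofReal.comp hg_cont) (antitoneOn_div_one_add_sq hC.le)
    (integrable_div_one_add_sq C).integrableOn (fun u => by simpa using hg_bound u) hτ.ne' hfinf
    (fun t => by exact_mod_cast (hpos t).ne')
  have hnorm t : Real.log ‖1 + (z : ℂ) * finf t‖ = Real.log (1 + z * finf t) := by
    rw [← Complex.norm_of_nonneg (hpos t).le]
    push_cast
    rfl
  simp_rw [hnorm] at h
  refine h.congr fun M => ?_
  rw [← norm_det_one_add_smul_ofReal]
  rfl
end
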